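/- Let d ≥ 3 and let H = F_2[T, X_2, …, X_d]/(X_i² − T·X_i : 2 ≤ i ≤ d). Then H is not strongly Koszul: there exists no minimal system X of homogeneous generators of the augmentation ideal H_+ such that for every subset Y ⊊ X and every x ∈ X \ Y, the colon ideal (Y) : x is generated by a subset of X. -/

import Mathlib

open MvPolynomial

/-- The colon ideal `I : x = {a | a * x ∈ I}`. -/
def colonIdeal {A : Type*} [Ring A] (I : Ideal A) (x : A) : Ideal A :=
  Submodule.comap (LinearMap.toSpanSingleton A A x) I

/-- The defining relations `X_i² − T·X_i` (with `T = X 0`) of the cohomology of a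
superpythagorean field. -/
noncomputable def spRel (d : ℕ) [NeZero d] : Ideal (MvPolynomial (Fin d) (ZMod 2)) :=
  Ideal.span {p | ∃ i : Fin d, i ≠ 0 ∧ p = X i ^ 2 - X 0 * X i}

/-- The algebra `H = F₂[T, X₂, …, X_d]/(X_i² − T·X_i)`. -/
abbrev SPH (d : ℕ) [NeZero d] := MvPolynomial (Fin d) (ZMod 2) ⧸ spRel d

/-- The images `t = gen d 0`, `α_i = gen d i` of the variables in `H`. -/
noncomputable def gen (d : ℕ) [NeZero d] (i : Fin d) : SPH d :=
  Ideal.Quotient.mk (spRel d) (X i)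

/-- The augmentation ideal `H_+` of `H` (the ideal of elements with zero constant term,
which is generated by the images of the variables since `H` is generated in degree 1). -/
noncomputable def Hplus (d : ℕ) [NeZero d] : Ideal (SPH d) :=
  Ideal.span (Set.range (gen d))

/-- An element of `H` is homogeneous (of some degree `n`) if it is the image of a
homogeneous polynomial of degree `n`; since the relation ideal is homogeneous this
agrees with the quotient grading. -/
def IsHomogElem (d : ℕ) [NeZero d] (h : SPH d) : Prop :=
  ∃ n : ℕ, ∃ p : MvPolynomial (Fin d) (ZMod 2),
    p.IsHomogeneous n ∧ Ideal.Quotient.mk (spRel d) p = h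

open TrivSqZeroExt in
/-- The truncation `H → F₂ ⊕ V`, `V = F₂^d`, remembering constant and linear parts. -/
noncomputable def trunc (d : ℕ) [NeZero d] :
    SPH d →+* TrivSqZeroExt (ZMod 2) (Fin d → ZMod 2) :=
  Ideal.Quotient.lift (spRel d)
    (aeval (R := ZMod 2) (fun i : Fin d =>
      (TrivSqZeroExt.inr (Pi.single i 1) :
        TrivSqZeroExt (ZMod 2) (Fin d → ZMod 2)))).toRingHom (by
    intro a ha
    have : spRel d ≤ RingHom.ker (aeval (R := ZMod 2) (fun i : Fin d =>
      (TrivSqZeroExt.inr (Pi.single i 1) :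
        TrivSqZeroExt (ZMod 2) (Fin d → ZMod 2)))).toRingHom := by
      refine Ideal.span_le.2 ?_
      rintro p ⟨i, _, rfl⟩
      simp [RingHom.mem_ker, pow_two, TrivSqZeroExt.inr_mul_inr]
    exact this ha)

lemma trunc_mk (d : ℕ) [NeZero d] (p : MvPolynomial (Fin d) (ZMod 2)) :
    (trunc d (Ideal.Quotient.mk _ p)).fst = coeff 0 p ∧
    ∀ i, (trunc d (Ideal.Quotient.mk _ p)).snd i = coeff (Finsupp.single i 1) p := by
  classical
  have h : trunc d (Ideal.Quotient.mk _ p) = aeval (R := ZMod 2) (fun i : Fin d =>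
      (TrivSqZeroExt.inr (Pi.single i 1) :
        TrivSqZeroExt (ZMod 2) (Fin d → ZMod 2))) p := rfl
  rw [h]
  clear h
  induction p using MvPolynomial.induction_on with
  | C a =>
    have : aeval (R := ZMod 2) (fun i : Fin d =>
      (TrivSqZeroExt.inr (Pi.single i 1) :
        TrivSqZeroExt (ZMod 2) (Fin d → ZMod 2))) (C a) = TrivSqZeroExt.inl a := by
      rw [← MvPolynomial.algebraMap_eq, AlgHom.commutes]; rfl
    rw [this]
    refine ⟨by simp, fun i => ?_⟩
    rw [coeff_C, if_neg]
    · simp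
    · intro h; simpa using (DFunLike.congr_fun h i)
  | add p q hp hq =>
    refine ⟨by simp [hp.1, hq.1], fun i => ?_⟩
    simp [hp.2, hq.2]
  | mul_X p j hp =>
    refine ⟨by rw [coeff_mul_X']; simp, fun i => ?_⟩
    rw [coeff_mul_X']
    simp only [map_mul, aeval_X, TrivSqZeroExt.snd_mul, TrivSqZeroExt.snd_inr,
      TrivSqZeroExt.fst_inr, hp.1]
    by_cases hij : j = i
    · subst hij; simp
    · simp [Finsupp.single_apply, Pi.single_apply, hij, Ne.symm hij, eq_comm]

/-- The linear form attached to a vector. -/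
noncomputable def lf (d : ℕ) [NeZero d] : (Fin d → ZMod 2) →ₗ[ZMod 2] SPH d :=
  Fintype.linearCombination (ZMod 2) (gen d)

lemma lf_single (d : ℕ) [NeZero d] (i : Fin d) : lf d (Pi.single i 1) = gen d i := by
  classical
  simp [lf, Fintype.linearCombination_apply_single]

lemma trunc_gen (d : ℕ) [NeZero d] (i : Fin d) :
    trunc d (gen d i) = TrivSqZeroExt.inr (Pi.single i 1) := by
  simp [trunc, gen]

lemma trunc_lf (d : ℕ) [NeZero d] (v : Fin d → ZMod 2) :
    trunc d (lf d v) = TrivSqZeroExt.inr v := by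
  classical
  have key : ∀ (c : ZMod 2) (h : SPH d), trunc d (c • h) = c • trunc d h := by
    intro c h
    obtain rfl | rfl : c = 0 ∨ c = 1 := by revert c; decide
    · simp
    · simp
  simp only [lf, Fintype.linearCombination_apply, map_sum, key, trunc_gen]
  simp only [← TrivSqZeroExt.inr_smul]
  rw [← TrivSqZeroExt.inr_sum]
  congr 1
  ext j
  simp [Finset.sum_apply, Pi.single_apply]

lemma lf_injective (d : ℕ) [NeZero d] : Function.Injective (lf d) := by
  intro u v h
  have := congrArg (trunc d) h
  rw [trunc_lf, trunc_lf] at this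
  exact TrivSqZeroExt.inr_injective this

lemma trunc_span (d : ℕ) [NeZero d] (S : Set (SPH d))
    (hS : ∀ z ∈ S, (trunc d z).fst = 0) (h : SPH d) (hh : h ∈ Ideal.span S) :
    (trunc d h).fst = 0 ∧
      (trunc d h).snd ∈ Submodule.span (ZMod 2) ((fun z => (trunc d z).snd) '' S) := by
  induction hh using Submodule.span_induction with
  | mem x hx => exact ⟨hS x hx, Submodule.subset_span ⟨x, hx, rfl⟩⟩
  | zero => simp
  | add x y _ _ hx hy =>
    refine ⟨by simp [hx.1, hy.1], ?_⟩
    simpa using Submodule.add_mem _ hx.2 hy.2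
  | smul a x _ hx =>
    refine ⟨by simp [hx.1], ?_⟩
    simp only [smul_eq_mul, map_mul, TrivSqZeroExt.snd_mul, hx.1]
    simpa using Submodule.smul_mem _ _ hx.2

lemma Hplus_fst (d : ℕ) [NeZero d] (h : SPH d) (hh : h ∈ Hplus d) :
    (trunc d h).fst = 0 := by
  refine (trunc_span d _ ?_ h hh).1
  rintro _ ⟨i, rfl⟩
  simp [trunc_gen]

lemma span_top (d : ℕ) [NeZero d] (S : Set (SPH d))
    (hS : ∀ z ∈ S, (trunc d z).fst = 0) (h : Hplus d ≤ Ideal.span S) :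
    Submodule.span (ZMod 2) ((fun z => (trunc d z).snd) '' S) = ⊤ := by
  classical
  rw [eq_top_iff, ← (Pi.basisFun (ZMod 2) (Fin d)).span_eq, Submodule.span_le]
  rintro _ ⟨i, rfl⟩
  have := (trunc_span d S hS (gen d i) (h (Ideal.subset_span ⟨i, rfl⟩))).2
  rw [trunc_gen] at this
  simpa using this

lemma two_not_enough (d : ℕ) [NeZero d] (hd : 3 ≤ d) (u v : Fin d → ZMod 2) :
    ¬ Hplus d ≤ Ideal.span {lf d u, lf d v} := by
  classical
  intro h
  have h1 := span_top d _ (by rintro z (rfl | rfl) <;> simp [trunc_lf]) h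
  have h2 : ((fun z => (trunc d z).snd) '' {lf d u, lf d v}) =
      ((({u, v} : Finset (Fin d → ZMod 2))) : Set (Fin d → ZMod 2)) := by
    simp [Set.image_insert_eq, trunc_lf]
  rw [h2] at h1
  have h3 := finrank_span_finset_le_card (R := ZMod 2) ({u, v} : Finset (Fin d → ZMod 2))
  rw [Set.finrank, h1, finrank_top] at h3
  have h4 : ({u, v} : Finset (Fin d → ZMod 2)).card ≤ 2 := Finset.card_le_two
  simp at h3
  omega

lemma homog_cases (d : ℕ) [NeZero d] (z : SPH d) (hz : IsHomogElem d z) :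
    (∃ v, z = lf d v) ∨ (trunc d z).snd = 0 := by
  classical
  obtain ⟨n, p, hp, rfl⟩ := hz
  by_cases hn : n = 1
  · subst hn
    left
    have hp' : p ∈ homogeneousSubmodule (Fin d) (ZMod 2) 1 := hp
    rw [homogeneousSubmodule_one_eq_span_X] at hp'
    induction hp' using Submodule.span_induction with
    | mem x hx =>
      obtain ⟨i, rfl⟩ := hx
      exact ⟨Pi.single i 1, (lf_single d i).symm⟩
    | zero => exact ⟨0, by simp⟩
    | add x y hx' hy' hx hy =>
      rw [← homogeneousSubmodule_one_eq_span_X] at hx' hy'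
      obtain ⟨a, ha⟩ := hx hx'
      obtain ⟨b, hb⟩ := hy hy'
      exact ⟨a + b, by simp [ha, hb]⟩
    | smul c x hx' hx =>
      rw [← homogeneousSubmodule_one_eq_span_X] at hx'
      obtain ⟨a, ha⟩ := hx hx'
      refine ⟨c • a, ?_⟩
      rw [(lf d).map_smul, ← ha]; rfl
  · right
    ext i
    rw [(trunc_mk d p).2]
    refine hp.coeff_eq_zero ?_
    simp [Finsupp.degree_single]
    omega

/-- Evaluation at a point with `t = 1`. -/
noncomputable def evpt (d : ℕ) [NeZero d] (e : Fin d → ZMod 2) (he : e 0 = 1) :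
    SPH d →+* ZMod 2 :=
  Ideal.Quotient.lift (spRel d) (MvPolynomial.eval e) (by
    intro a ha
    have : spRel d ≤ RingHom.ker (MvPolynomial.eval e) := by
      refine Ideal.span_le.2 ?_
      rintro p ⟨i, _, rfl⟩
      have : ∀ c : ZMod 2, c ^ 2 - c = 0 := by decide
      simp [RingHom.mem_ker, he, this]
    exact this ha)

lemma evpt_lf (d : ℕ) [NeZero d] (e : Fin d → ZMod 2) (he : e 0 = 1) (v : Fin d → ZMod 2) :
    evpt d e he (lf d v) = v ⬝ᵥ e := by
  have key : ∀ (c : ZMod 2) (h : SPH d), evpt d e he (c • h) = c * evpt d e he h := by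
    intro c h
    obtain rfl | rfl : c = 0 ∨ c = 1 := by revert c; decide
    · simp
    · simp
  simp only [lf, Fintype.linearCombination_apply, map_sum, key, dotProduct]
  refine Finset.sum_congr rfl fun i _ => ?_
  congr 1
  exact (Ideal.Quotient.lift_mk _ _ _).trans (eval_X i)

lemma exists_pt (d : ℕ) [NeZero d] (v : Fin d → ZMod 2) (hv : v ≠ 0) :
    ∃ e : Fin d → ZMod 2, e 0 = 1 ∧ v ⬝ᵥ e = 1 := by
  classical
  have h01 : ∀ c : ZMod 2, c = 0 ∨ c = 1 := by decide
  by_cases h0 : v 0 = 1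
  · exact ⟨Pi.single 0 1, by simp, by simp [h0]⟩
  · have h0' : v 0 = 0 := (h01 _).resolve_right h0
    obtain ⟨i, hi⟩ := Function.ne_iff.1 hv
    have hi1 : v i = 1 := (h01 _).resolve_left hi
    have hi0 : i ≠ 0 := by rintro rfl; exact h0 hi1
    exact ⟨Pi.single 0 1 + Pi.single i 1, by simp [Pi.single_apply, hi0.symm],
      by simp [dotProduct_add, h0', hi1]⟩

lemma no_diff (d : ℕ) [NeZero d] (u v : Fin d → ZMod 2) (hv : v ≠ 0)
    (huv : lf d u * lf d v = 0) (i : Fin d) (hi : i ≠ 0) (h1 : u i = 1) (h2 : v i = 0) :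
    False := by
  classical
  have h01 : ∀ c : ZMod 2, c = 0 ∨ c = 1 := by decide
  have ev : ∀ e : Fin d → ZMod 2, e 0 = 1 → (u ⬝ᵥ e) * (v ⬝ᵥ e) = 0 := by
    intro e he
    rw [← evpt_lf d e he, ← evpt_lf d e he, ← map_mul, huv, map_zero]
  obtain ⟨e, he, hve⟩ := exists_pt d v hv
  rcases h01 (u ⬝ᵥ e) with hu | hu
  · have := ev (e + Pi.single i 1) (by simp [he, Pi.single_apply, hi.symm])
    simp [dotProduct_add, hu, hve, h1, h2] at this
  · have := ev e he
    simp [hu, hve] at this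

lemma mul_eq_zero_lf (d : ℕ) [NeZero d] (u v : Fin d → ZMod 2) (hu : u ≠ 0) (hv : v ≠ 0)
    (huv : lf d u * lf d v = 0) : u = v + Pi.single 0 1 := by
  classical
  have h01 : ∀ c : ZMod 2, c = 0 ∨ c = 1 := by decide
  have hne : ∀ i, i ≠ 0 → u i = v i := by
    intro i hi
    rcases h01 (u i) with h1 | h1 <;> rcases h01 (v i) with h2 | h2
    · rw [h1, h2]
    · exact (no_diff d v u hu (by rw [mul_comm, huv]) i hi h2 h1).elim
    · exact (no_diff d u v hv huv i hi h1 h2).elim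
    · rw [h1, h2]
  have h0 : u 0 ≠ v 0 := by
    intro h0
    have : u = v := by
      ext i
      by_cases hi : i = 0
      · rw [hi, h0]
      · exact hne i hi
    subst this
    obtain ⟨e, he, hve⟩ := exists_pt d u hv
    have := congrArg (evpt d e he) huv
    rw [map_mul, evpt_lf, hve] at this
    simp at this
  ext i
  by_cases hi : i = 0
  · subst hi
    have : ∀ a b : ZMod 2, a ≠ b → a = b + 1 := by decide
    simpa using this _ _ h0
  · simp [hi, hne i hi]

lemma add_self_SPH (d : ℕ) [NeZero d] (a : SPH d) : a + a = 0 := by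
  have : (2 : ZMod 2) • a = 0 := by
    rw [show (2 : ZMod 2) = 0 from rfl, zero_smul]
  rwa [two_smul] at this

lemma lf_sq (d : ℕ) [NeZero d] (v : Fin d → ZMod 2) :
    (lf d v + gen d 0) * lf d v = 0 := by
  classical
  have h2 : ∀ x : SPH d, x + x = 0 := add_self_SPH d
  have hg : ∀ i, gen d i * gen d i = gen d 0 * gen d i := by
    intro i
    by_cases hi : i = 0
    · rw [hi]
    · have : Ideal.Quotient.mk (spRel d) (X i ^ 2 - X 0 * X i) = 0 :=
        Ideal.Quotient.eq_zero_iff_mem.2 (Ideal.subset_span ⟨i, hi, rfl⟩)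
      rw [map_sub, map_mul, map_pow, sub_eq_zero, pow_two] at this
      exact this
  have hv : v ∈ Submodule.span (ZMod 2) (Set.range (Pi.basisFun (ZMod 2) (Fin d))) := by
    rw [(Pi.basisFun (ZMod 2) (Fin d)).span_eq]; trivial
  induction hv using Submodule.span_induction with
  | mem x hx =>
    obtain ⟨i, rfl⟩ := hx
    rw [Pi.basisFun_apply, lf_single, add_mul, hg, h2]
  | zero => simp
  | add x y _ _ hx hy =>
    rw [map_add]
    linear_combination hx + hy + h2 (lf d x * lf d y)
  | smul c x _ hx =>
    obtain rfl | rfl : c = 0 ∨ c = 1 := by revert c; decide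
    · simp
    · simpa using hx

/-- For `d ≥ 3`, the algebra `H = F₂[T, X₂, …, X_d]/(X_i² − T·X_i)`
is not strongly Koszul: no minimal system `X` of homogeneous generators of `H_+` has all
colon ideals `(Y) : x` (for `Y ⊊ X`, `x ∈ X \ Y`) generated by subsets of `X`. -/
theorem stmt11 (d : ℕ) [NeZero d] (hd : 3 ≤ d) :
    ¬ ∃ X : Set (SPH d),
        (∀ z ∈ X, IsHomogElem d z) ∧
        Ideal.span X = Hplus d ∧
        (∀ Y ⊂ X, Ideal.span Y ≠ Hplus d) ∧
        (∀ Y ⊂ X, ∀ z ∈ X \ Y,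
          ∃ Z ⊆ X, colonIdeal (Ideal.span Y) z = Ideal.span Z) := by
  classical
  rintro ⟨X, hhom, hspan, hmin, hcol⟩
  have hXp : ∀ z ∈ X, (trunc d z).fst = 0 := fun z hz =>
    Hplus_fst d z (hspan ▸ Ideal.subset_span hz)
  -- no redundant element
  have hred : ∀ x ∈ X, x ∉ Ideal.span (X \ {x}) := by
    intro x hx hxs
    refine hmin (X \ {x}) ⟨Set.sdiff_subset, fun h => (h hx).2 rfl⟩ ?_
    refine le_antisymm (hspan ▸ Ideal.span_mono Set.sdiff_subset) ?_
    rw [← hspan, Ideal.span_le]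
    intro y hy
    by_cases hyx : y = x
    · rw [hyx]; exact hxs
    · exact Ideal.subset_span ⟨hy, hyx⟩
  -- all elements are linear forms
  have hlin : ∀ z ∈ X, ∃ v, z = lf d v := by
    by_contra hcon
    push Not at hcon
    obtain ⟨z, hz, hzv⟩ := hcon
    refine hmin {z ∈ X | ∃ v, z = lf d v} ⟨fun y hy => hy.1, fun h => ?_⟩ ?_
    · obtain ⟨v, hv⟩ := (h hz).2
      exact hzv v hv
    refine le_antisymm (hspan ▸ Ideal.span_mono (fun y hy => hy.1)) ?_
    have htop := span_top d X hXp hspan.ge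
    have hle : Submodule.span (ZMod 2) ((fun z => (trunc d z).snd) '' X) ≤
        ((Ideal.span {z ∈ X | ∃ v, z = lf d v}).restrictScalars (ZMod 2)).comap (lf d) := by
      rw [Submodule.span_le]
      rintro _ ⟨y, hy, rfl⟩
      rcases homog_cases d y (hhom y hy) with ⟨v, rfl⟩ | h0
      · have : lf d v ∈ Ideal.span {z ∈ X | ∃ v, z = lf d v} :=
          Ideal.subset_span ⟨hy, v, rfl⟩
        simpa [trunc_lf] using this
      · simp [h0]
    rw [htop] at hle
    rw [Hplus, Ideal.span_le]
    rintro _ ⟨i, rfl⟩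
    have := hle (Submodule.mem_top (x := Pi.single i 1))
    simpa [lf_single] using this
  have hzero : ∀ z ∈ X, z ≠ 0 := by
    rintro z hz rfl
    exact hred 0 hz (Submodule.zero_mem _)
  have h2 : ∀ x : SPH d, x + x = 0 := add_self_SPH d
  have hg0 : gen d 0 = lf d (Pi.single 0 1) := (lf_single d 0).symm
  have ht0 : gen d 0 ≠ 0 := by
    intro h
    have := congrArg (trunc d) h
    rw [trunc_gen, map_zero] at this
    have h3 := congrFun (congrArg TrivSqZeroExt.snd this) 0
    simp at h3
  have hpair : ∀ z ∈ X, z ≠ gen d 0 → z + gen d 0 ∈ X := by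
    intro z hz hzt
    obtain ⟨Z, hZX, hZ⟩ := hcol ∅ ⟨Set.empty_subset _, fun h => h hz⟩ z ⟨hz, fun h => h⟩
    have hmem : ∀ a, a ∈ Ideal.span Z ↔ a * z = 0 := by
      intro a
      rw [← hZ]
      simp [colonIdeal]
    obtain ⟨v, rfl⟩ := hlin z hz
    have hv : v ≠ 0 := by rintro rfl; exact hzero _ hz (map_zero _)
    have hw : ∀ w ∈ Z, w = lf d v + gen d 0 := by
      intro w hw
      have h := (hmem w).1 (Ideal.subset_span hw)
      obtain ⟨u, rfl⟩ := hlin w (hZX hw)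
      have hu : u ≠ 0 := by rintro rfl; exact hzero _ (hZX hw) (map_zero _)
      rw [mul_eq_zero_lf d u v hu hv h, map_add, hg0]
    have hin := (hmem _).2 (lf_sq d v)
    rcases Z.eq_empty_or_nonempty with rfl | ⟨w, hwZ⟩
    · exfalso
      apply hzt
      have : lf d v + gen d 0 = 0 := by simpa using hin
      linear_combination this - h2 (gen d 0)
    · rw [← hw w hwZ]; exact hZX hwZ
  have ex : ∀ u v, ∃ z ∈ X, z ≠ lf d u ∧ z ≠ lf d v := by
    intro u v
    by_contra hcon
    push Not at hcon
    refine two_not_enough d hd u v (hspan ▸ Ideal.span_mono ?_)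
    intro z hz
    by_cases h : z = lf d u
    · exact Or.inl h
    · exact Or.inr (hcon z hz h)
  have htX : gen d 0 ∉ X := by
    intro ht
    obtain ⟨z, hz, hzt, -⟩ := ex (Pi.single 0 1) 0
    rw [← hg0] at hzt
    apply hred _ ht
    have e : gen d 0 = z + (z + gen d 0) := by linear_combination - h2 z
    have m1 : z ∈ Ideal.span (X \ {gen d 0}) := Ideal.subset_span ⟨hz, hzt⟩
    have m2 : z + gen d 0 ∈ Ideal.span (X \ {gen d 0}) :=
      Ideal.subset_span ⟨hpair z hz hzt, fun h => hzero z hz (by simpa using h)⟩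
    have := Ideal.add_mem _ m1 m2
    rwa [← e] at this
  have hp : ∀ z ∈ X, z + gen d 0 ∈ X := fun z hz =>
    hpair z hz (by rintro rfl; exact htX hz)
  obtain ⟨z, hz, -⟩ := ex 0 0
  obtain ⟨v, rfl⟩ := hlin z hz
  obtain ⟨g, hg, hg1, hg2⟩ := ex v (v + Pi.single 0 1)
  rw [map_add, ← hg0] at hg2
  apply hred g hg
  have e : g = lf d v + (lf d v + gen d 0) + (g + gen d 0) := by
    linear_combination - h2 (lf d v) - h2 (gen d 0)
  have m1 : lf d v ∈ Ideal.span (X \ {g}) := Ideal.subset_span ⟨hz, Ne.symm hg1⟩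
  have m2 : lf d v + gen d 0 ∈ Ideal.span (X \ {g}) :=
    Ideal.subset_span ⟨hp _ hz, Ne.symm hg2⟩
  have m3 : g + gen d 0 ∈ Ideal.span (X \ {g}) :=
    Ideal.subset_span ⟨hp _ hg, fun h => ht0 (by simpa using h)⟩
  have := Ideal.add_mem _ (Ideal.add_mem _ m1 m2) m3
  rwa [← e] at this
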